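/- arXiv:2211.02645 — 6 statements merged into one kernel-verified Lean document; each statement's English description precedes it below -/
import Mathlib

section
/- Let f : ℝ^d → ℝ be differentiable with M-Lipschitz gradient, i.e. ‖∇f(x₁) − ∇f(x₂)‖ ≤ M‖x₁ − x₂‖ for all x₁, x₂. Then for every x ∈ ℝ^d and every ν > 0, the forward-difference gradient estimator satisfies ‖∇^ν f(x) − ∇f(x)‖ ≤ (√d · M / 2) · ν. -/
open RealInnerProductSpace

/-- Forward-difference gradient estimator `∇^ν f(x) := Σ_j ((f(x + ν e_j) − f(x))/ν) e_j`. -/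
noncomputable def fdGrad (d : ℕ) (f : EuclideanSpace ℝ (Fin d) → ℝ)
    (x : EuclideanSpace ℝ (Fin d)) (ν : ℝ) : EuclideanSpace ℝ (Fin d) :=
  ∑ j : Fin d, ((f (x + ν • EuclideanSpace.single j (1 : ℝ)) - f x) / ν) •
    EuclideanSpace.single j (1 : ℝ)

/-!
Along a segment issuing from `x`, the first-order Taylor remainder of `f` has derivative at most
`M t ‖v‖ ^ 2` in norm at time `t`; comparing with the primitive `M t ^ 2 ‖v‖ ^ 2 / 2` yields the
factor `1 / 2`, which a plain mean value inequality would lose. For `v = ν e_j` this bounds each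
coordinate of the error by `M ν / 2`, and passing from the sup norm to the Euclidean norm costs
`√d`.
-/

open Set

section SecondOrder

variable {E G : Type*} [NormedAddCommGroup E] [NormedSpace ℝ E]
  [NormedAddCommGroup G] [NormedSpace ℝ G]

theorem norm_image_sub_le_of_norm_deriv_le_mul_sub {g g' : ℝ → G} {a b C : ℝ} (hab : a ≤ b)
    (hg : ∀ t ∈ Icc a b, HasDerivWithinAt g (g' t) (Icc a b) t)
    (bound : ∀ t ∈ Ico a b, ‖g' t‖ ≤ C * (t - a)) :
    ‖g b - g a‖ ≤ C / 2 * (b - a) ^ 2 := by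
  have hB (t : ℝ) : HasDerivAt (fun t ↦ C / 2 * (t - a) ^ 2) (C * (t - a)) t :=
    ((((hasDerivAt_id t).sub_const a).pow 2).const_mul (C / 2)).congr_deriv (by simp; ring)
  exact image_norm_le_of_norm_deriv_right_le_deriv_boundary (f := fun t ↦ g t - g a)
    (fun t ht ↦ ((hg t ht).sub_const _).continuousWithinAt)
    (fun t ht ↦ ((hg t (Ico_subset_Icc_self ht)).sub_const _).mono_of_mem_nhdsWithin
      (Icc_mem_nhdsGE_of_mem ht))
    (by simp) hB bound (right_mem_Icc.2 hab)

theorem norm_image_sub_sub_le_of_norm_hasFDerivWithin_sub_le {f : E → G} {f' : E → E →L[ℝ] G}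
    {φ : E →L[ℝ] G} {s : Set E} {x y : E} {C : ℝ} (hs : Convex ℝ s)
    (hf : ∀ z ∈ s, HasFDerivWithinAt f (f' z) s z)
    (bound : ∀ z ∈ s, ‖f' z - φ‖ ≤ C * ‖z - x‖) (hx : x ∈ s) (hy : y ∈ s) :
    ‖f y - f x - φ (y - x)‖ ≤ C / 2 * ‖y - x‖ ^ 2 := by
  let γ : ℝ → E := AffineMap.lineMap x y
  have hγ : MapsTo γ (Icc 0 1) s := hs.mapsTo_lineMap hx hy
  have hderiv : ∀ t ∈ Icc (0 : ℝ) 1, HasDerivWithinAt (fun t ↦ f (γ t) - φ (γ t))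
      ((f' (γ t) - φ) (y - x)) (Icc 0 1) t := fun t ht ↦
    ((hf _ (hγ ht)).sub φ.hasFDerivWithinAt).comp_hasDerivWithinAt t
      AffineMap.hasDerivWithinAt_lineMap hγ
  have hderiv_bound : ∀ t ∈ Ico (0 : ℝ) 1,
      ‖(f' (γ t) - φ) (y - x)‖ ≤ C * ‖y - x‖ ^ 2 * (t - 0) := fun t ht ↦ by
    have hdist : ‖γ t - x‖ = t * ‖y - x‖ := by
      simp [γ, AffineMap.lineMap_apply, norm_smul, abs_of_nonneg ht.1]
    calc ‖(f' (γ t) - φ) (y - x)‖ ≤ C * ‖γ t - x‖ * ‖y - x‖ :=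
          ContinuousLinearMap.le_of_opNorm_le _ (bound _ (hγ (Ico_subset_Icc_self ht))) _
      _ = C * ‖y - x‖ ^ 2 * (t - 0) := by rw [hdist]; ring
  calc ‖f y - f x - φ (y - x)‖ = ‖f (γ 1) - φ (γ 1) - (f (γ 0) - φ (γ 0))‖ := by
        simp only [γ, AffineMap.lineMap_apply_one, AffineMap.lineMap_apply_zero, map_sub]
        congr 1
        abel
    _ ≤ C * ‖y - x‖ ^ 2 / 2 * (1 - 0) ^ 2 :=
        norm_image_sub_le_of_norm_deriv_le_mul_sub zero_le_one hderiv hderiv_bound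
    _ = C / 2 * ‖y - x‖ ^ 2 := by ring

end SecondOrder

theorem abs_image_sub_sub_inner_le_of_norm_hasGradientWithin_sub_le {H : Type*}
    [NormedAddCommGroup H] [InnerProductSpace ℝ H] [CompleteSpace H] {f : H → ℝ} {f' : H → H}
    {s : Set H} {v x y : H} {C : ℝ} (hs : Convex ℝ s)
    (hf : ∀ z ∈ s, HasGradientWithinAt f (f' z) s z)
    (bound : ∀ z ∈ s, ‖f' z - v‖ ≤ C * ‖z - x‖) (hx : x ∈ s) (hy : y ∈ s) :
    |f y - f x - ⟪v, y - x⟫| ≤ C / 2 * ‖y - x‖ ^ 2 :=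
  norm_image_sub_sub_le_of_norm_hasFDerivWithin_sub_le (φ := InnerProductSpace.toDual ℝ H v) hs
    (fun z hz ↦ (hf z hz).hasFDerivWithinAt)
    (fun z hz ↦ by simpa only [← map_sub, LinearIsometryEquiv.norm_map] using bound z hz) hx hy

theorem piLp_two_norm_le_sqrt_card_mul {ι : Type*} [Fintype ι] {β : ι → Type*}
    [∀ i, SeminormedAddCommGroup (β i)] {v : PiLp 2 β} {c : ℝ} (hv : ∀ i, ‖v i‖ ≤ c) :
    ‖v‖ ≤ √(Fintype.card ι) * c := by
  obtain hι | ⟨⟨i⟩⟩ := isEmpty_or_nonempty ι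
  · simp [PiLp.norm_eq_of_L2]
  have hc : 0 ≤ c := (norm_nonneg _).trans (hv i)
  calc ‖v‖ = √(∑ i, ‖v i‖ ^ 2) := PiLp.norm_eq_of_L2 v
    _ ≤ √(∑ _i : ι, c ^ 2) := by gcongr with i; exact hv i
    _ = √(Fintype.card ι) * c := by simp [Real.sqrt_sq hc]

section ForwardDifference

variable {d : ℕ} {f : EuclideanSpace ℝ (Fin d) → ℝ} {x : EuclideanSpace ℝ (Fin d)} {M ν : ℝ}

theorem fdGrad_apply (f : EuclideanSpace ℝ (Fin d) → ℝ) (x : EuclideanSpace ℝ (Fin d)) (ν : ℝ)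
    (j : Fin d) :
    fdGrad d f x ν j = (f (x + ν • EuclideanSpace.single j 1) - f x) / ν := by
  simp [fdGrad, Pi.single_apply]

theorem abs_fdGrad_sub_gradient_apply_le (hf : Differentiable ℝ f)
    (bound : ∀ y, ‖gradient f y - gradient f x‖ ≤ M * ‖y - x‖) (hν : ν ≠ 0) (j : Fin d) :
    |(fdGrad d f x ν - gradient f x) j| ≤ M / 2 * |ν| := by
  let e : EuclideanSpace ℝ (Fin d) := EuclideanSpace.single j 1
  have inner_eq : ⟪gradient f x, x + ν • e - x⟫ = ν * gradient f x j := by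
    rw [add_sub_cancel_left, inner_smul_right, EuclideanSpace.inner_single_right]
    simp
  have norm_eq : ‖x + ν • e - x‖ = |ν| := by simp [e, norm_smul]
  have remainder_le : |f (x + ν • e) - f x - ν * gradient f x j| ≤ M / 2 * |ν| ^ 2 := by
    rw [← inner_eq, ← norm_eq]
    exact abs_image_sub_sub_inner_le_of_norm_hasGradientWithin_sub_le convex_univ
      (fun z _ ↦ hasGradientWithinAt_univ.2 (hf z).hasGradientAt) (fun z _ ↦ bound z)
      (mem_univ x) (mem_univ _)
  calc |(fdGrad d f x ν - gradient f x) j|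
      = |f (x + ν • e) - f x - ν * gradient f x j| / |ν| := by
        rw [PiLp.sub_apply, fdGrad_apply, ← abs_div, sub_div _ (ν * _), mul_div_cancel_left₀ _ hν]
    _ ≤ M / 2 * |ν| ^ 2 / |ν| := by gcongr
    _ = M / 2 * |ν| := by field_simp

theorem stmt0_general (hf : Differentiable ℝ f)
    (bound : ∀ y, ‖gradient f y - gradient f x‖ ≤ M * ‖y - x‖) (hν : ν ≠ 0) :
    ‖fdGrad d f x ν - gradient f x‖ ≤ (√d * M / 2) * |ν| :=
  calc ‖fdGrad d f x ν - gradient f x‖ ≤ √(Fintype.card (Fin d)) * (M / 2 * |ν|) :=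
        piLp_two_norm_le_sqrt_card_mul (abs_fdGrad_sub_gradient_apply_le hf bound hν)
    _ = (√d * M / 2) * |ν| := by rw [Fintype.card_fin]; ring

end ForwardDifference

theorem stmt0 (d : ℕ) (hd : 1 ≤ d) (f : EuclideanSpace ℝ (Fin d) → ℝ) (M : ℝ)
    (hdiff : Differentiable ℝ f)
    (hlip : ∀ x₁ x₂, ‖gradient f x₁ - gradient f x₂‖ ≤ M * ‖x₁ - x₂‖)
    (x : EuclideanSpace ℝ (Fin d)) (ν : ℝ) (hν : 0 < ν) :
    ‖fdGrad d f x ν - gradient f x‖ ≤ (Real.sqrt d * M / 2) * ν := by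
  simpa only [abs_of_pos hν] using stmt0_general hdiff (fun y ↦ hlip y x) hν.ne'
end

section
/- Let f₀, f₁, …, f_m : ℝ^d → ℝ be convex and differentiable, Ω := {x : f_i(x) ≤ 0 for all i = 1..m}, and suppose there exists x̄ with f_i(x̄) < 0 for all i = 1..m (Slater's condition). Let x_c ∈ Ω be such that ∇f₀(x_c) ≠ 0, ∇f_i(x_c) ≠ 0 for every i with f_i(x_c) = 0, and x_c is not a minimizer of f₀ over Ω. Then there exists x_s ∈ Ω such that f₀(x_s) < f₀(x_c) and ⟨∇f_i(x_c), x_s − x_c⟩ < 0 for every i ∈ {1,…,m} with f_i(x_c) = 0. -/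
open RealInnerProductSpace

/-!
Slater's condition lets a feasible point with a better objective value be moved slightly towards
`x_bar`: by convexity every constraint becomes strict, and a small enough move keeps the objective
below `f₀ x_c`. At the resulting point `x_s` the first-order inequality for an active constraint
reads `⟪∇ f i x_c, x_s - x_c⟫ ≤ f i x_s - f i x_c = f i x_s < 0`.
-/

open AffineMap Set Topology

section OrderedModule

variable {𝕜 E β : Type*} [Ring 𝕜] [PartialOrder 𝕜] [IsOrderedRing 𝕜] [AddCommGroup E] [Module 𝕜 E]
  [AddCommGroup β] [PartialOrder β] [Module 𝕜 β] {s : Set E} {f : E → β} {x y : E} {c : β} {t : 𝕜}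

theorem map_lineMap_le_of_convexOn (hf : ConvexOn 𝕜 s f) (hx : x ∈ s) (hy : y ∈ s)
    (ht : t ∈ Icc 0 1) : f (lineMap x y t) ≤ lineMap (f x) (f y) t := by
  simpa only [lineMap_apply_module] using
    hf.2 hx hy (sub_nonneg.2 ht.2) ht.1 (sub_add_cancel 1 t)

theorem map_lineMap_lt_of_convexOn [IsOrderedAddMonoid β] [IsStrictOrderedModule 𝕜 β]
    (hf : ConvexOn 𝕜 s f) (hx : x ∈ s) (hy : y ∈ s) (hxc : f x ≤ c) (hyc : f y < c)
    (ht : t ∈ Ioc 0 1) : f (lineMap x y t) < c :=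
  calc
    f (lineMap x y t) ≤ lineMap (f x) (f y) t :=
      map_lineMap_le_of_convexOn hf hx hy (Ioc_subset_Icc_self ht)
    _ ≤ lineMap c (f y) t := lineMap_mono_left hxc ht.2
    _ < lineMap c c t := lineMap_strict_mono_right hyc ht.1
    _ = c := lineMap_same_apply c t

end OrderedModule

section Real

variable {E : Type*} [AddCommGroup E] [Module ℝ E] {s : Set E} {f : E → ℝ} {x y : E} {c : ℝ}

theorem eventually_map_lineMap_lt_of_convexOn (hf : ConvexOn ℝ s f) (hx : x ∈ s) (hy : y ∈ s)
    (hxc : f x < c) : ∀ᶠ t : ℝ in 𝓝[>] 0, f (lineMap x y t) < c := by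
  have chord_lt : ∀ᶠ t : ℝ in 𝓝[>] 0, lineMap (f x) (f y) t < c :=
    (lineMap_continuous.tendsto' 0 (f x) (lineMap_apply_zero _ _)).eventually_lt_const hxc
      |>.filter_mono nhdsWithin_le_nhds
  filter_upwards [chord_lt, Ioc_mem_nhdsGT one_pos] with t ht_lt ht
  exact (map_lineMap_le_of_convexOn hf hx hy (Ioc_subset_Icc_self ht)).trans_lt ht_lt

theorem exists_strictly_feasible_lt_of_convexOn {ι : Type*} {g : ι → E → ℝ}
    (hf : ConvexOn ℝ s f) (hg : ∀ i, ConvexOn ℝ s (g i))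
    (hy : y ∈ s) (hgy : ∀ i, g i y < 0) (hx : x ∈ s) (hgx : ∀ i, g i x ≤ 0) (hfx : f x < c) :
    ∃ z ∈ s, f z < c ∧ ∀ i, g i z < 0 := by
  obtain ⟨t, hft, ht⟩ := ((eventually_map_lineMap_lt_of_convexOn hf hx hy hfx).and
    (Ioc_mem_nhdsGT one_pos)).exists
  exact ⟨lineMap x y t, hf.1.lineMap_mem hx hy (Ioc_subset_Icc_self ht), hft,
    fun i => map_lineMap_lt_of_convexOn (hg i) hx hy (hgx i) (hgy i) ht⟩

end Real

theorem apply_sub_le_sub_of_convexOn_of_hasFDerivAt {E : Type*} [NormedAddCommGroup E]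
    [NormedSpace ℝ E] {s : Set E} {f : E → ℝ} {f' : E →L[ℝ] ℝ} {x y : E} (hf : ConvexOn ℝ s f)
    (hx : x ∈ s) (hy : y ∈ s) (hf' : HasFDerivAt f f' x) : f' (y - x) ≤ f y - f x := by
  have hderiv : HasDerivAt (f ∘ lineMap x y) (f' (y - x)) (0 : ℝ) :=
    HasFDerivAt.comp_hasDerivAt 0 (by rwa [lineMap_apply_zero]) hasDerivAt_lineMap
  have hslope : f' (y - x) ≤ slope (f ∘ lineMap x y) (0 : ℝ) 1 :=
    (hf.comp_affineMap (lineMap x y)).le_slope_of_hasDerivAt (by simpa) (by simpa) one_pos hderiv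
  simpa [slope_def_field] using hslope

section Hilbert

variable {E : Type*} [NormedAddCommGroup E] [InnerProductSpace ℝ E] [CompleteSpace E] {s : Set E}

theorem inner_gradient_sub_le_sub_of_convexOn {f : E → ℝ} {x y : E} (hf : ConvexOn ℝ s f)
    (hx : x ∈ s) (hy : y ∈ s) (hfx : DifferentiableAt ℝ f x) :
    ⟪gradient f x, y - x⟫ ≤ f y - f x :=
  apply_sub_le_sub_of_convexOn_of_hasFDerivAt hf hx hy hfx.hasGradientAt.hasFDerivAt

theorem stmt11_general {ι : Type*} {f₀ : E → ℝ} {f : ι → E → ℝ}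
    (hconv₀ : ConvexOn ℝ s f₀) (hconv : ∀ i, ConvexOn ℝ s (f i))
    {x_bar : E} (hx_bar : x_bar ∈ s) (hSlater : ∀ i, f i x_bar < 0)
    {x_c : E} (hx_c : x_c ∈ s) (hdiff : ∀ i, f i x_c = 0 → DifferentiableAt ℝ (f i) x_c)
    (hbetter : ∃ y ∈ s, (∀ i, f i y ≤ 0) ∧ f₀ y < f₀ x_c) :
    ∃ x_s ∈ s, (∀ i, f i x_s < 0) ∧ f₀ x_s < f₀ x_c ∧
      ∀ i, f i x_c = 0 → ⟪gradient (f i) x_c, x_s - x_c⟫ < 0 := by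
  obtain ⟨y, hy, hfy, hf₀y⟩ := hbetter
  obtain ⟨x_s, hx_s, hf₀x_s, hfx_s⟩ :=
    exists_strictly_feasible_lt_of_convexOn hconv₀ hconv hx_bar hSlater hy hfy hf₀y
  refine ⟨x_s, hx_s, hfx_s, hf₀x_s, fun i hactive => ?_⟩
  calc
    ⟪gradient (f i) x_c, x_s - x_c⟫ ≤ f i x_s - f i x_c :=
      inner_gradient_sub_le_sub_of_convexOn (hconv i) hx_c hx_s (hdiff i hactive)
    _ = f i x_s := by rw [hactive, sub_zero]
    _ < 0 := hfx_s i

end Hilbert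

theorem stmt11 (d m : ℕ) (f₀ : EuclideanSpace ℝ (Fin d) → ℝ)
    (f : Fin m → EuclideanSpace ℝ (Fin d) → ℝ)
    (hconv₀ : ConvexOn ℝ Set.univ f₀) (hconv : ∀ i, ConvexOn ℝ Set.univ (f i))
    (hdiff₀ : Differentiable ℝ f₀) (hdiff : ∀ i, Differentiable ℝ (f i))
    (Ω : Set (EuclideanSpace ℝ (Fin d)))
    (hΩ : Ω = {x | ∀ i, f i x ≤ 0})
    (x_bar : EuclideanSpace ℝ (Fin d)) (hSlater : ∀ i, f i x_bar < 0)
    (x_c : EuclideanSpace ℝ (Fin d)) (hxc : x_c ∈ Ω)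
    (hgrad₀ : gradient f₀ x_c ≠ 0)
    (hgrad : ∀ i, f i x_c = 0 → gradient (f i) x_c ≠ 0)
    (hnotmin : ¬ ∀ y ∈ Ω, f₀ x_c ≤ f₀ y) :
    ∃ x_s ∈ Ω, f₀ x_s < f₀ x_c ∧
      ∀ i, f i x_c = 0 → ⟪gradient (f i) x_c, x_s - x_c⟫ < 0 := by
  subst hΩ
  push Not at hnotmin
  obtain ⟨x_s, -, hfx_s, hx_s⟩ := stmt11_general hconv₀ hconv (mem_univ x_bar) hSlater
    (mem_univ x_c) (fun i _ => hdiff i x_c) (by simpa using hnotmin)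
  exact ⟨x_s, fun i => (hfx_s i).le, hx_s⟩
end

section
/- Let f₀ : ℝ^d → ℝ be differentiable with M₀-Lipschitz gradient, μ > 0, and let x_c, x_s ∈ ℝ^d with x_s ≠ x_c be such that σ := ⟨∇f₀(x_c), x_s − x_c⟩ < 0. Define x(t) := x_c + t(x_s − x_c) and t̄ := min(1, −σ/((M₀ + μ)‖x_s − x_c‖²)). Then for every t with 0 < t < t̄, f₀(x(t)) + μ‖x(t) − x_c‖² < f₀(x_c). -/
open RealInnerProductSpace

/-!
Along the segment from `x` to `y`, the derivative of the first-order Taylor remainder of `f` at `x`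
is at most `s * M * ‖y - x‖ ^ 2` at time `s`, so the remainder is at most `M / 2 * ‖y - x‖ ^ 2`.
With `y = x + t • v`, the change of `f` plus the penalty `μ * ‖t • v‖ ^ 2` is therefore at most
`t * (⟪∇f x, v⟫ + t * (M / 2 + μ) * ‖v‖ ^ 2)`, which is negative for small `t > 0` along a
descent direction `v`.
-/

open AffineMap Set

section TaylorRemainder

variable {E F : Type*} [NormedAddCommGroup E] [NormedSpace ℝ E]
  [NormedAddCommGroup F] [NormedSpace ℝ F]
  {f : E → F} {f' : E → E →L[ℝ] F} {S : Set E} {M : ℝ} {x y : E}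

theorem hasDerivWithinAt_taylorRemainder_lineMap (hS : Convex ℝ S)
    (hf : ∀ z ∈ S, HasFDerivWithinAt f (f' z) S z) (hx : x ∈ S) (hy : y ∈ S)
    {s : ℝ} (hs : s ∈ Icc (0 : ℝ) 1) :
    HasDerivWithinAt (fun r ↦ f (lineMap x y r) - f x - r • f' x (y - x))
      ((f' (lineMap x y s) - f' x) (y - x)) (Icc 0 1) s := by
  have hmaps : MapsTo (lineMap x y) (Icc (0 : ℝ) 1) S := fun r hr ↦ hS.lineMap_mem hx hy hr
  have hcomp : HasDerivWithinAt (fun r : ℝ ↦ f (lineMap x y r))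
      (f' (lineMap x y s) (y - x)) (Icc 0 1) s :=
    (hf _ (hmaps hs)).comp_hasDerivWithinAt s hasDerivWithinAt_lineMap hmaps
  have hlinear : HasDerivWithinAt (fun r : ℝ ↦ r • f' x (y - x)) (f' x (y - x)) (Icc 0 1) s := by
    simpa only [one_smul, id_eq] using (hasDerivWithinAt_id s (Icc 0 1)).smul_const (f' x (y - x))
  exact (hcomp.sub_const (f x)).sub hlinear

theorem norm_sub_apply_lineMap_le (hS : Convex ℝ S)
    (hlip : ∀ z ∈ S, ‖f' z - f' x‖ ≤ M * ‖z - x‖) (hx : x ∈ S) (hy : y ∈ S)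
    {s : ℝ} (hs : s ∈ Icc (0 : ℝ) 1) :
    ‖(f' (lineMap x y s) - f' x) (y - x)‖ ≤ s * (M * ‖y - x‖ ^ 2) := by
  have hdist : ‖lineMap x y s - x‖ = s * ‖y - x‖ := by
    rw [lineMap_apply_module', add_sub_cancel_right, norm_smul, Real.norm_of_nonneg hs.1]
  calc ‖(f' (lineMap x y s) - f' x) (y - x)‖
      ≤ ‖f' (lineMap x y s) - f' x‖ * ‖y - x‖ := ContinuousLinearMap.le_opNorm _ _
    _ ≤ M * ‖lineMap x y s - x‖ * ‖y - x‖ := by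
      gcongr
      exact hlip _ (hS.lineMap_mem hx hy hs)
    _ = s * (M * ‖y - x‖ ^ 2) := by rw [hdist]; ring

theorem norm_taylorRemainder_le_of_hasFDerivWithinAt (hS : Convex ℝ S)
    (hf : ∀ z ∈ S, HasFDerivWithinAt f (f' z) S z)
    (hlip : ∀ z ∈ S, ‖f' z - f' x‖ ≤ M * ‖z - x‖) (hx : x ∈ S) (hy : y ∈ S) :
    ‖f y - f x - f' x (y - x)‖ ≤ M / 2 * ‖y - x‖ ^ 2 := by
  have hderiv := fun s hs ↦
    hasDerivWithinAt_taylorRemainder_lineMap hS hf hx hy (s := s) hs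
  have hbound : ∀ s : ℝ,
      HasDerivAt (fun r ↦ r ^ 2 / 2 * (M * ‖y - x‖ ^ 2)) (s * (M * ‖y - x‖ ^ 2)) s := fun s ↦ by
    simpa using ((hasDerivAt_pow 2 s).div_const 2).mul_const (M * ‖y - x‖ ^ 2)
  have hremainder := image_norm_le_of_norm_deriv_right_le_deriv_boundary
    (fun s hs ↦ (hderiv s hs).continuousWithinAt)
    (fun s hs ↦ (hderiv s (Ico_subset_Icc_self hs)).mono_of_mem_nhdsWithin
      (Icc_mem_nhdsGE_of_mem hs))
    (by simp) hbound
    (fun s hs ↦ norm_sub_apply_lineMap_le hS hlip hx hy (Ico_subset_Icc_self hs))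
    (right_mem_Icc.2 zero_le_one)
  simp only [lineMap_apply_one, one_smul] at hremainder
  exact hremainder.trans_eq (by ring)

end TaylorRemainder

section Gradient

variable {E : Type*} [NormedAddCommGroup E] [InnerProductSpace ℝ E] [CompleteSpace E]
  {f : E → ℝ} {M : ℝ} {x : E}

theorem le_add_inner_gradient_add_sq_norm (hf : Differentiable ℝ f)
    (hlip : ∀ y, ‖gradient f y - gradient f x‖ ≤ M * ‖y - x‖) (y : E) :
    f y ≤ f x + ⟪gradient f x, y - x⟫ + M / 2 * ‖y - x‖ ^ 2 := by
  have hlip_dual : ∀ z ∈ univ, ‖InnerProductSpace.toDual ℝ E (gradient f z) -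
      InnerProductSpace.toDual ℝ E (gradient f x)‖ ≤ M * ‖z - x‖ := fun z _ ↦ by
    rw [← map_sub, LinearIsometryEquiv.norm_map]
    exact hlip z
  have hremainder := norm_taylorRemainder_le_of_hasFDerivWithinAt convex_univ
    (fun z _ ↦ (hf z).hasGradientAt.hasFDerivAt.hasFDerivWithinAt) hlip_dual
    (mem_univ x) (mem_univ y)
  rw [InnerProductSpace.toDual_apply_apply] at hremainder
  linarith [(Real.le_norm_self _).trans hremainder]

theorem stmt12_general (hf : Differentiable ℝ f)
    (hlip : ∀ y, ‖gradient f y - gradient f x‖ ≤ M * ‖y - x‖) {μ t : ℝ} {v : E} (ht : 0 < t)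
    (hstep : t * ((M / 2 + μ) * ‖v‖ ^ 2) < -⟪gradient f x, v⟫) :
    f (x + t • v) + μ * ‖x + t • v - x‖ ^ 2 < f x := by
  have hdescent := le_add_inner_gradient_add_sq_norm hf hlip (x + t • v)
  rw [add_sub_cancel_left, real_inner_smul_right, norm_smul, Real.norm_of_nonneg ht.le]
    at hdescent
  rw [add_sub_cancel_left, norm_smul, Real.norm_of_nonneg ht.le]
  calc f (x + t • v) + μ * (t * ‖v‖) ^ 2
      ≤ f x + t * (⟪gradient f x, v⟫ + t * ((M / 2 + μ) * ‖v‖ ^ 2)) := by linarith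
    _ < f x := add_lt_of_neg_right _ (mul_neg_of_pos_of_neg ht (by linarith))

end Gradient

theorem mul_half_add_mul_lt_of_lt_div {M μ n a t : ℝ} (hM : 0 ≤ M) (hμ : 0 < μ) (hn : 0 < n)
    (ht : 0 ≤ t) (hlt : t < a / ((M + μ) * n)) : t * ((M / 2 + μ) * n) < a :=
  calc t * ((M / 2 + μ) * n)
      ≤ t * ((M + μ) * n) := by gcongr; exact half_le_self hM
    _ < a := (lt_div_iff₀ (by positivity)).1 hlt

theorem stmt12 (d : ℕ) (f₀ : EuclideanSpace ℝ (Fin d) → ℝ) (M₀ μ : ℝ) (hμ : 0 < μ)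
    (hdiff : Differentiable ℝ f₀)
    (hlip : ∀ x₁ x₂, ‖gradient f₀ x₁ - gradient f₀ x₂‖ ≤ M₀ * ‖x₁ - x₂‖)
    (x_c x_s : EuclideanSpace ℝ (Fin d)) (hne : x_s ≠ x_c)
    (σ : ℝ) (hσdef : σ = ⟪gradient f₀ x_c, x_s - x_c⟫) (hσ : σ < 0)
    (tbar : ℝ) (htbar : tbar = min 1 (-σ / ((M₀ + μ) * ‖x_s - x_c‖ ^ 2))) :
    ∀ t : ℝ, 0 < t → t < tbar →
      f₀ (x_c + t • (x_s - x_c)) + μ * ‖(x_c + t • (x_s - x_c)) - x_c‖ ^ 2 < f₀ x_c := by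
  intro t ht htlt
  have hv : 0 < ‖x_s - x_c‖ := norm_sub_pos_iff.2 hne
  have hM : 0 ≤ M₀ := nonneg_of_mul_nonneg_left ((norm_nonneg _).trans (hlip x_s x_c)) hv
  subst hσdef htbar
  exact stmt12_general hdiff (hlip · x_c) ht
    (mul_half_add_mul_lt_of_lt_div hM hμ (pow_pos hv 2) ht.le (lt_min_iff.1 htlt).2)
end

section
/- Consider the SZO-QQ setup below, and let x_c be a cluster point of the iterate sequence (x_k) (i.e. the limit of some subsequence). If ∇f₀(x_c) ≠ 0, then the active set at x_c is nonempty, i.e. there exists i ∈ {1,…,m} with f_i(x_c) = 0. -/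
open RealInnerProductSpace Filter

/-!
Comparing each step with the trivial step `y = x k` shows that `f₀ (x k)` decreases, so it stays
above `f₀ x_c`. If no constraint were active at `x_c`, then every `y` close to `x_c` would be
admissible for the subproblem at all iterates close to `x_c`, because the constraint gradients used
there are bounded. Optimality of those steps gives `f₀ x_c ≤ f₀ y + μ ‖y - x_c‖ ^ 2` in the limit,
so `x_c` locally minimizes `f₀ + μ ‖· - x_c‖ ^ 2`, whose derivative at `x_c` is that of `f₀`.
-/

open scoped Topology NNReal

theorem norm_fdGrad_le {d : ℕ} {f : EuclideanSpace ℝ (Fin d) → ℝ} {K : ℝ≥0}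
    (hf : LipschitzWith K f) (x : EuclideanSpace ℝ (Fin d)) (ν : ℝ) :
    ‖fdGrad d f x ν‖ ≤ d * K := by
  have norm_term_le (j : Fin d) : ‖((f (x + ν • EuclideanSpace.single j (1 : ℝ)) - f x) / ν) •
      (EuclideanSpace.single j (1 : ℝ) : EuclideanSpace ℝ (Fin d))‖ ≤ K := by
    rw [norm_smul, PiLp.norm_single, norm_one, mul_one, norm_div]
    refine div_le_of_le_mul₀ (norm_nonneg _) K.coe_nonneg ?_
    simpa [norm_smul] using hf.norm_sub_le (x + ν • EuclideanSpace.single j (1 : ℝ)) x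
  exact (norm_sum_le_of_le _ fun j _ ↦ norm_term_le j).trans_eq (by simp)

theorem le_of_antitone_of_mapClusterPt {α β : Type*} [TopologicalSpace α] [Preorder α]
    [ClosedIicTopology α] [Preorder β] {u : β → α} {a : α}
    (hu : Antitone u) (ha : MapClusterPt a atTop u) (k : β) : a ≤ u k :=
  isClosed_Iic.mem_of_mapClusterPt ha ((eventually_ge_atTop k).mono fun _ hk ↦ hu hk)

section QuadraticModel

variable {E ι : Type*} [NormedAddCommGroup E] [NormedSpace ℝ E]

theorem eq_zero_of_isLocalMin_add_mul_norm_sub_sq {f : E → ℝ} {f' : E →L[ℝ] ℝ} {a : E} {μ : ℝ}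
    (hf : HasFDerivAt f f' a) (hmin : IsLocalMin (fun y ↦ f y + μ * ‖y - a‖ ^ 2) a) : f' = 0 := by
  have hasFDerivAt_penalty : HasFDerivAt (fun y ↦ μ * ‖y - a‖ ^ 2) (0 : E →L[ℝ] ℝ) a :=
    ((Asymptotics.isBigO_refl (fun y ↦ ‖y - a‖ ^ 2) (𝓝 a)).const_mul_left μ).hasFDerivAt
      one_lt_two
  simpa using hmin.hasFDerivAt_eq_zero (hf.add hasFDerivAt_penalty)

/-- The points satisfying the quadratic models at `x` of the constraints `f i ≤ 0`, where `g i` is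
a surrogate for the derivative of `f i` at `x` and `c i` is the curvature coefficient. In the
notation of the SZO-QQ method, `S(x_k)` is the case `g i = ⟪∇^ν f_i(x_k), ·⟫`, `c i = 2 M_i`. -/
def quadraticModelSet (f : ι → E → ℝ) (g : ι → E →L[ℝ] ℝ) (c : ι → ℝ) (x : E) : Set E :=
  {y | ∀ i, f i x + g i (y - x) + c i * ‖y - x‖ ^ 2 ≤ 0}

theorem self_mem_quadraticModelSet {f : ι → E → ℝ} {x : E} (hx : ∀ i, f i x ≤ 0)
    (g : ι → E →L[ℝ] ℝ) (c : ι → ℝ) : x ∈ quadraticModelSet f g c x := by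
  simpa [quadraticModelSet] using hx

theorem eventually_mem_quadraticModelSet [Finite ι] {α : Type*} {l : Filter α}
    {f : ι → E → ℝ} {g : α → ι → E →L[ℝ] ℝ} {c C : ι → ℝ} {x : α → E} {a y : E}
    (hx : Tendsto x l (𝓝 a)) (hf : ∀ i, ContinuousAt (f i) a) (hg : ∀ k i, ‖g k i‖ ≤ C i)
    (hy : ∀ i, f i a + C i * ‖y - a‖ + c i * ‖y - a‖ ^ 2 < 0) :
    ∀ᶠ k in l, y ∈ quadraticModelSet f (g k) c (x k) := by
  refine eventually_all.2 fun i ↦ ?_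
  have hcont : ContinuousAt (fun z ↦ f i z + C i * ‖y - z‖ + c i * ‖y - z‖ ^ 2) a := by
    have := hf i
    fun_prop
  filter_upwards [(hcont.tendsto.comp hx).eventually_lt_const (hy i)] with k hk
  calc f i (x k) + g k i (y - x k) + c i * ‖y - x k‖ ^ 2
      ≤ f i (x k) + C i * ‖y - x k‖ + c i * ‖y - x k‖ ^ 2 := by
        gcongr
        exact (le_abs_self _).trans ((g k i).le_of_opNorm_le (hg k i) _)
    _ ≤ 0 := hk.le

/-- Feasible iterates in which each step does at least as well, for the proximal objective
`f₀ y + μ ‖y - x k‖ ^ 2`, as every point of the quadratic model set at `x k` built from the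
derivative surrogates `g k`. The iterate `x (k + 1)` may lie outside that model set. -/
structure IsSafeProximalSequence (f₀ : E → ℝ) (f : ι → E → ℝ) (g : ℕ → ι → E →L[ℝ] ℝ)
    (c : ι → ℝ) (μ : ℝ) (x : ℕ → E) : Prop where
  feasible : ∀ k i, f i (x k) ≤ 0
  le_of_mem : ∀ k, ∀ y ∈ quadraticModelSet f (g k) c (x k),
    f₀ (x (k + 1)) + μ * ‖x (k + 1) - x k‖ ^ 2 ≤ f₀ y + μ * ‖y - x k‖ ^ 2

variable {f₀ : E → ℝ} {f : ι → E → ℝ} {g : ℕ → ι → E →L[ℝ] ℝ} {c C : ι → ℝ} {μ : ℝ}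
  {x : ℕ → E} {a y : E}

namespace IsSafeProximalSequence

theorem antitone (hx : IsSafeProximalSequence f₀ f g c μ x) (hμ : 0 ≤ μ) : Antitone (f₀ ∘ x) := by
  refine antitone_nat_of_succ_le fun k ↦ ?_
  calc f₀ (x (k + 1))
      ≤ f₀ (x (k + 1)) + μ * ‖x (k + 1) - x k‖ ^ 2 := le_add_of_nonneg_right (by positivity)
    _ ≤ f₀ (x k) + μ * ‖x k - x k‖ ^ 2 :=
        hx.le_of_mem k _ (self_mem_quadraticModelSet (hx.feasible k) _ _)
    _ = f₀ (x k) := by simp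

theorem le_add_mul_norm_sub_sq_of_mapClusterPt [Finite ι]
    (hx : IsSafeProximalSequence f₀ f g c μ x) (hμ : 0 ≤ μ)
    (hf₀ : ContinuousAt f₀ a) (hf : ∀ i, ContinuousAt (f i) a) (hg : ∀ k i, ‖g k i‖ ≤ C i)
    (ha : MapClusterPt a atTop x)
    (hy : ∀ i, f i a + C i * ‖y - a‖ + c i * ‖y - a‖ ^ 2 < 0) :
    f₀ a ≤ f₀ y + μ * ‖y - a‖ ^ 2 := by
  have hle (k : ℕ) : f₀ a ≤ f₀ (x k) :=
    le_of_antitone_of_mapClusterPt (hx.antitone hμ) (ha.continuousAt_comp hf₀) k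
  obtain ⟨U, -, hxU⟩ := mapClusterPt_iff_ultrafilter.1 ha
  have hlim : Tendsto (fun k ↦ f₀ y + μ * ‖y - x k‖ ^ 2) U (𝓝 (f₀ y + μ * ‖y - a‖ ^ 2)) :=
    (((hxU.const_sub y).norm.pow 2).const_mul μ).const_add (f₀ y)
  refine ge_of_tendsto hlim ?_
  filter_upwards [eventually_mem_quadraticModelSet hxU hf hg hy] with k hk
  calc f₀ a ≤ f₀ (x (k + 1)) := hle (k + 1)
    _ ≤ f₀ (x (k + 1)) + μ * ‖x (k + 1) - x k‖ ^ 2 := le_add_of_nonneg_right (by positivity)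
    _ ≤ f₀ y + μ * ‖y - x k‖ ^ 2 := hx.le_of_mem k y hk

theorem isLocalMin_add_mul_norm_sub_sq_of_mapClusterPt [Finite ι]
    (hx : IsSafeProximalSequence f₀ f g c μ x) (hμ : 0 ≤ μ)
    (hf₀ : ContinuousAt f₀ a) (hf : ∀ i, ContinuousAt (f i) a) (hg : ∀ k i, ‖g k i‖ ≤ C i)
    (ha : MapClusterPt a atTop x) (hinactive : ∀ i, f i a < 0) :
    IsLocalMin (fun y ↦ f₀ y + μ * ‖y - a‖ ^ 2) a := by
  have hnear : ∀ᶠ y in 𝓝 a, ∀ i, f i a + C i * ‖y - a‖ + c i * ‖y - a‖ ^ 2 < 0 := by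
    refine eventually_all.2 fun i ↦ ?_
    have hcont : Continuous fun y ↦ f i a + C i * ‖y - a‖ + c i * ‖y - a‖ ^ 2 := by fun_prop
    exact hcont.continuousAt.eventually_lt_const (by simpa using hinactive i)
  filter_upwards [hnear] with y hy
  simpa using hx.le_add_mul_norm_sub_sq_of_mapClusterPt hμ hf₀ hf hg ha hy

end IsSafeProximalSequence

theorem stmt15_general [Finite ι] {f₀' : E →L[ℝ] ℝ}
    (hx : IsSafeProximalSequence f₀ f g c μ x) (hμ : 0 ≤ μ)
    (hf₀ : HasFDerivAt f₀ f₀' a) (hf₀' : f₀' ≠ 0)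
    (hf : ∀ i, ContinuousAt (f i) a) (hg : ∀ k i, ‖g k i‖ ≤ C i)
    (ha : MapClusterPt a atTop x) :
    ∃ i, f i a = 0 := by
  by_contra! hne
  have hinactive (i : ι) : f i a < 0 :=
    (isClosed_Iic.mem_of_mapClusterPt (ha.continuousAt_comp (hf i))
      (.of_forall (hx.feasible · i))).lt_of_ne (hne i)
  exact hf₀' <| eq_zero_of_isLocalMin_add_mul_norm_sub_sq hf₀ <|
    hx.isLocalMin_add_mul_norm_sub_sq_of_mapClusterPt hμ hf₀.continuousAt hf hg ha hinactive

end QuadraticModel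

theorem stmt15 (d m : ℕ) (hd : 1 ≤ d) [NeZero m]
    (f₀ : EuclideanSpace ℝ (Fin d) → ℝ) (f : Fin m → EuclideanSpace ℝ (Fin d) → ℝ)
    (hconv₀ : ConvexOn ℝ Set.univ f₀) (hconv : ∀ i, ConvexOn ℝ Set.univ (f i))
    (hdiff₀ : Differentiable ℝ f₀) (hdiff : ∀ i, Differentiable ℝ (f i))
    (L₀ M₀ : ℝ) (L Minf M : Fin m → ℝ) (μ : ℝ) (hμ : 0 < μ)
    (hL₀ : ∀ x₁ x₂, |f₀ x₁ - f₀ x₂| ≤ L₀ * ‖x₁ - x₂‖)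
    (hM₀ : ∀ x₁ x₂, ‖gradient f₀ x₁ - gradient f₀ x₂‖ ≤ M₀ * ‖x₁ - x₂‖)
    (hL : ∀ i x₁ x₂, |f i x₁ - f i x₂| ≤ L i * ‖x₁ - x₂‖)
    (hMinf : ∀ i x₁ x₂, ‖gradient (f i) x₁ - gradient (f i) x₂‖ ≤ Minf i * ‖x₁ - x₂‖)
    (hM : ∀ i, Minf i < M i)
    (Lmax : ℝ) (hLmax : Lmax = ⨆ i, L i)
    (x : ℕ → EuclideanSpace ℝ (Fin d))
    (hfeas : ∀ k i, f i (x k) < 0)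
    (l ν : ℕ → ℝ)
    (hl : ∀ k, l k = ⨅ i, (-(f i (x k))) / Lmax)
    (hν₀ : ν 0 = 2 * l 0 / Real.sqrt d)
    (hνk : ∀ k : ℕ, 1 ≤ k → ν k = min (2 * l k / Real.sqrt d) (1 / (k : ℝ)))
    (S : ℕ → Set (EuclideanSpace ℝ (Fin d)))
    (hS : ∀ k, S k = ⋂ i, {y : EuclideanSpace ℝ (Fin d) |
        f i (x k) + ⟪fdGrad d (f i) (x k) (ν k), y - x k⟫ + 2 * M i * ‖y - x k‖ ^ 2 ≤ 0})
    (hstep : ∀ k, x (k + 1) ∈ S k)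
    (hopt : ∀ k, ∀ y ∈ S k,
      f₀ (x (k + 1)) + μ * ‖x (k + 1) - x k‖ ^ 2 ≤ f₀ y + μ * ‖y - x k‖ ^ 2)
    (β : ℝ)
    (hβbdd : Bornology.IsBounded {y : EuclideanSpace ℝ (Fin d) | (∀ i, f i y ≤ 0) ∧ f₀ y ≤ β})
    (hβ₀ : (∀ i, f i (x 0) ≤ 0) ∧ f₀ (x 0) ≤ β)
    (x_c : EuclideanSpace ℝ (Fin d)) (φ : ℕ → ℕ) (hφ : StrictMono φ)
    (hlim : Tendsto (x ∘ φ) atTop (nhds x_c))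
    (hgrad₀ : gradient f₀ x_c ≠ 0) :
    ∃ i, f i x_c = 0 := by
  have hlip (i : Fin m) : LipschitzWith (L i).toNNReal (f i) :=
    .of_dist_le' fun y z ↦ by simpa only [dist_eq_norm, Real.norm_eq_abs] using hL i y z
  have hx : IsSafeProximalSequence f₀ f (fun k i ↦ innerSL ℝ (fdGrad d (f i) (x k) (ν k)))
      (fun i ↦ 2 * M i) μ x :=
    { feasible := fun k i ↦ (hfeas k i).le
      le_of_mem := fun k y hy ↦ hopt k y ((hS k).symm ▸ Set.mem_iInter.2 hy) }
  exact stmt15_general hx hμ.le (hdiff₀ x_c).hasGradientAt.hasFDerivAt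
    ((map_ne_zero_iff _ (InnerProductSpace.toDual ℝ _).injective).2 hgrad₀)
    (fun i ↦ (hdiff i).continuous.continuousAt)
    (fun k i ↦ (innerSL_apply_norm ℝ _).trans_le (norm_fdGrad_le (hlip i) _ _))
    (.of_comp hφ.tendsto_atTop hlim.mapClusterPt)
end

section
/- Consider the SZO-QQ setup below. Suppose in addition that there exists a cluster point x_c* of the iterate sequence (x_k) such that ∇f_i(x_c*) ≠ 0 for every i ∈ {1,…,m} with f_i(x_c*) = 0. Then every cluster point x_c of (x_k) is a minimizer of f₀ over Ω, i.e. f₀(x_c) = inf{f₀(x) : x ∈ Ω}. -/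
open RealInnerProductSpace Filter

/-!
Let `w` be strictly feasible and let the iterates converge to `x_c` along a filter `F`. Difference
quotients of convex functions are monotone in the step, so the estimated gradients converge to the
true gradients at `x_c` along `F`. Hence each `y` that satisfies the limiting constraints
`f_i(x_c) + ⟪∇f_i(x_c), y - x_c⟫ + 2M_i‖y - x_c‖² < 0` eventually lies in `S(x_k)`, and comparing
`x_{k+1}` with `y` gives `f₀(x_c) ≤ f₀(y) + μ‖y - x_c‖²`. The points `y = x_c + s(w - x_c)` with
small `s > 0` qualify; there convexity turns this inequality into
`f₀(x_c) ≤ f₀(w) + sμ‖w - x_c‖²`, and `s → 0` gives `f₀(x_c) ≤ f₀(w)`. As `x₀` is a Slater point,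
the strictly feasible points are dense in `Ω`.
-/

open Set Topology

section DifferenceQuotient

variable {E : Type*} [AddCommGroup E] [Module ℝ E] {f : E → ℝ}

lemma differenceQuotient_le_of_convexOn (hf : ConvexOn ℝ univ f) (x v : E) {s t : ℝ}
    (hs : s ≠ 0) (ht : t ≠ 0) (hst : s ≤ t) :
    (f (x + s • v) - f x) / s ≤ (f (x + t • v) - f x) / t := by
  have hline : ConvexOn ℝ univ fun r : ℝ ↦ f (x + r • v) := by
    simpa [Function.comp_def, AffineMap.lineMap_apply, add_comm] using
      hf.comp_affineMap (AffineMap.lineMap x (v + x))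
  simpa using hline.secant_mono (mem_univ 0) (mem_univ s) (mem_univ t) hs ht hst

lemma hasLineDerivAt_le_sub_of_convexOn (hf : ConvexOn ℝ univ f) {x y : E} {f' : ℝ}
    (hf' : HasLineDerivAt ℝ f f' x (y - x)) : f' ≤ f y - f x := by
  refine le_of_tendsto hf'.tendsto_slope_zero_right ?_
  filter_upwards [Ioc_mem_nhdsGT zero_lt_one] with t ht
  simpa [div_eq_inv_mul] using
    differenceQuotient_le_of_convexOn hf x (y - x) ht.1.ne' one_ne_zero ht.2

lemma tendsto_differenceQuotient_of_convexOn [TopologicalSpace E] [ContinuousAdd E]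
    (hf : ConvexOn ℝ univ f) (hcont : Continuous f) {x₀ v : E} {f' : ℝ}
    (hf' : HasLineDerivAt ℝ f f' x₀ v) {α : Type*} {F : Filter α} {x : α → E} {ν : α → ℝ}
    (hx : Tendsto x F (𝓝 x₀)) (hν : Tendsto ν F (𝓝[>] 0)) :
    Tendsto (fun a ↦ (f (x a + ν a • v) - f (x a)) / ν a) F (𝓝 f') := by
  have hfixed (t : ℝ) : Tendsto (fun a ↦ (f (x a + t • v) - f (x a)) / t) F
      (𝓝 (t⁻¹ • (f (x₀ + t • v) - f x₀))) := by
    rw [smul_eq_mul, ← div_eq_inv_mul]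
    exact (((hcont.tendsto _).comp (hx.add_const _)).sub ((hcont.tendsto _).comp hx)).div_const t
  have hνpos : ∀ᶠ a in F, 0 < ν a := hν.eventually self_mem_nhdsWithin
  refine tendsto_order.2 ⟨fun b hb ↦ ?_, fun b hb ↦ ?_⟩
  · obtain ⟨t, hbt, ht⟩ := ((hf'.tendsto_slope_zero_left.eventually_const_lt hb).and
      self_mem_nhdsWithin).exists
    filter_upwards [(hfixed t).eventually_const_lt hbt, hνpos] with a hba hνa
    exact hba.trans_le (differenceQuotient_le_of_convexOn hf _ _ ht.ne hνa.ne' (ht.trans hνa).le)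
  · obtain ⟨t, hbt, ht⟩ := ((hf'.tendsto_slope_zero_right.eventually_lt_const hb).and
      self_mem_nhdsWithin).exists
    have hνt : ∀ᶠ a in F, ν a < t := hν.eventually (mem_nhdsWithin_of_mem_nhds (Iio_mem_nhds ht))
    filter_upwards [(hfixed t).eventually_lt_const hbt, hνpos, hνt] with a hba hνa hνt
    exact (differenceQuotient_le_of_convexOn hf _ _ hνa.ne' ht.ne' hνt.le).trans_lt hba

end DifferenceQuotient

section ForwardDifference

variable {d : ℕ} {f : EuclideanSpace ℝ (Fin d) → ℝ} {x₀ g : EuclideanSpace ℝ (Fin d)}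

lemma tendsto_fdGrad_of_convexOn (hf : ConvexOn ℝ univ f) (hg : HasGradientAt f g x₀)
    {α : Type*} {F : Filter α} {x : α → EuclideanSpace ℝ (Fin d)} {ν : α → ℝ}
    (hx : Tendsto x F (𝓝 x₀)) (hν : Tendsto ν F (𝓝[>] 0)) :
    Tendsto (fun a ↦ fdGrad d f (x a) (ν a)) F (𝓝 g) := by
  have hcoord : g = ∑ j, ⟪g, EuclideanSpace.single j 1⟫ • EuclideanSpace.single j (1 : ℝ) := by
    simpa [real_inner_comm] using ((EuclideanSpace.basisFun (Fin d) ℝ).sum_repr' g).symm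
  rw [hcoord]
  refine tendsto_finsetSum _ fun j _ ↦ Tendsto.smul_const ?_ _
  exact tendsto_differenceQuotient_of_convexOn hf hf.locallyLipschitz.continuous
    (hg.hasFDerivAt.hasLineDerivAt _) hx hν

lemma fdGrad_const (c : ℝ) (x : EuclideanSpace ℝ (Fin d)) (ν : ℝ) :
    fdGrad d (fun _ ↦ c) x ν = 0 := by
  simp [fdGrad]

end ForwardDifference

section QuadModel

variable {E : Type*} [NormedAddCommGroup E] [InnerProductSpace ℝ E]

/-- The quadratic model `f(x) + ⟪g, y - x⟫ + 2M‖y - x‖²` at `y` of a function `f` near `x`, where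
`g` stands for an exact or estimated gradient. The set `S(x_k)` of the SZO-QQ iteration consists of
the `y` at which the models of all constraint functions are nonpositive. -/
noncomputable def quadModel (f : E → ℝ) (M : ℝ) (g x y : E) : ℝ :=
  f x + ⟪g, y - x⟫ + 2 * M * ‖y - x‖ ^ 2

lemma tendsto_quadModel {f : E → ℝ} {x₀ : E} (hf : ContinuousAt f x₀) (M : ℝ) (y : E)
    {α : Type*} {F : Filter α} {g x : α → E} {g₀ : E}
    (hg : Tendsto g F (𝓝 g₀)) (hx : Tendsto x F (𝓝 x₀)) :
    Tendsto (fun a ↦ quadModel f M (g a) (x a) y) F (𝓝 (quadModel f M g₀ x₀ y)) := by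
  have hsub : Tendsto (fun a ↦ y - x a) F (𝓝 (y - x₀)) := hx.const_sub y
  exact ((hf.tendsto.comp hx).add (hg.inner hsub)).add ((hsub.norm.pow 2).const_mul _)

lemma eventually_quadModel_lineMap_neg {f : E → ℝ} {x w g : E}
    (hg : ⟪g, w - x⟫ ≤ f w - f x) (hx : f x ≤ 0) (hw : f w < 0) (M : ℝ) :
    ∀ᶠ s : ℝ in 𝓝[>] 0, quadModel f M g x (AffineMap.lineMap x w s) < 0 := by
  have hlim : Tendsto (fun s : ℝ ↦ f w + s * (2 * M * ‖w - x‖ ^ 2)) (𝓝[>] 0) (𝓝 (f w)) :=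
    tendsto_nhdsWithin_of_tendsto_nhds <| (by fun_prop : Continuous _).tendsto' 0 _ (by simp)
  filter_upwards [hlim.eventually_lt_const hw, Ioc_mem_nhdsGT zero_lt_one] with s hneg hs
  calc quadModel f M g x (AffineMap.lineMap x w s)
      = f x + s * ⟪g, w - x⟫ + s * (s * (2 * M * ‖w - x‖ ^ 2)) := by
        simp only [quadModel, AffineMap.lineMap_apply_module', add_sub_cancel_right,
          real_inner_smul_right, norm_smul, mul_pow, Real.norm_eq_abs, sq_abs]
        ring
    _ ≤ f x + s * (f w - f x) + s * (s * (2 * M * ‖w - x‖ ^ 2)) := by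
        gcongr
        exact hs.1.le
    _ = (1 - s) * f x + s * (f w + s * (2 * M * ‖w - x‖ ^ 2)) := by ring
    _ < 0 := add_neg_of_nonpos_of_neg
        (mul_nonpos_of_nonneg_of_nonpos (sub_nonneg.2 hs.2) hx) (mul_neg_of_pos_of_neg hs.1 hneg)

end QuadModel

section ConvexProgram

variable {E : Type*} {ι : Type*}

lemma setOf_nonpos_subset_closure_setOf_neg [AddCommGroup E] [Module ℝ E] [TopologicalSpace E]
    [ContinuousAdd E] [ContinuousSMul ℝ E] {f : ι → E → ℝ}
    (hf : ∀ i, ConvexOn ℝ univ (f i)) {w : E} (hw : ∀ i, f i w < 0) :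
    {y | ∀ i, f i y ≤ 0} ⊆ closure {y | ∀ i, f i y < 0} := by
  intro y hy
  have hneg : openSegment ℝ y w ⊆ {z | ∀ i, f i z < 0} := by
    rintro _ ⟨a, b, ha, hb, hab, rfl⟩ i
    calc f i (a • y + b • w)
        ≤ a • f i y + b • f i w := (hf i).2 trivial trivial ha.le hb.le hab
      _ < 0 := add_neg_of_nonpos_of_neg (mul_nonpos_of_nonneg_of_nonpos ha.le (hy i))
          (mul_neg_of_pos_of_neg hb (hw i))
  exact closure_mono hneg (segment_subset_closure_openSegment (left_mem_segment ℝ y w))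

lemma le_of_eventually_le_lineMap_add_sq [NormedAddCommGroup E] [NormedSpace ℝ E] {f : E → ℝ}
    (hf : ConvexOn ℝ univ f) {x w : E} {μ : ℝ}
    (h : ∀ᶠ s : ℝ in 𝓝[>] 0,
      f x ≤ f (AffineMap.lineMap x w s) + μ * ‖AffineMap.lineMap x w s - x‖ ^ 2) :
    f x ≤ f w := by
  have hlim : Tendsto (fun s : ℝ ↦ f w + s * (μ * ‖w - x‖ ^ 2)) (𝓝[>] 0) (𝓝 (f w)) :=
    tendsto_nhdsWithin_of_tendsto_nhds <| (by fun_prop : Continuous _).tendsto' 0 _ (by simp)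
  refine ge_of_tendsto hlim ?_
  filter_upwards [h, Ioc_mem_nhdsGT zero_lt_one] with s hle hs
  have hconv : f (AffineMap.lineMap x w s) ≤ (1 - s) * f x + s * f w := by
    rw [AffineMap.lineMap_apply_module]
    exact hf.2 trivial trivial (sub_nonneg.2 hs.2) hs.1.le (sub_add_cancel 1 s)
  have hnorm : ‖AffineMap.lineMap x w s - x‖ ^ 2 = s * (s * ‖w - x‖ ^ 2) := by
    rw [AffineMap.lineMap_apply_module', add_sub_cancel_right, norm_smul, mul_pow,
      Real.norm_eq_abs, sq_abs]
    ring
  rw [hnorm] at hle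
  refine le_of_mul_le_mul_left ?_ hs.1
  linarith

end ConvexProgram

section ProximalIteration

variable {E : Type*} [NormedAddCommGroup E] [InnerProductSpace ℝ E] {ι : Type*}
  {f₀ : E → ℝ} {f : ι → E → ℝ} {M : ι → ℝ} {μ : ℝ} {x : ℕ → E} {g : ι → ℕ → E}
  {F : Filter ℕ} {x_c : E} {g_c : ι → E}

lemma antitone_objective (hμ : 0 ≤ μ) (hfeas : ∀ k i, f i (x k) ≤ 0)
    (hopt : ∀ k y, (∀ i, quadModel (f i) (M i) (g i k) (x k) y ≤ 0) →
      f₀ (x (k + 1)) + μ * ‖x (k + 1) - x k‖ ^ 2 ≤ f₀ y + μ * ‖y - x k‖ ^ 2) :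
    Antitone (f₀ ∘ x) := by
  refine antitone_nat_of_succ_le fun k ↦ ?_
  calc f₀ (x (k + 1))
      ≤ f₀ (x (k + 1)) + μ * ‖x (k + 1) - x k‖ ^ 2 := le_add_of_nonneg_right (by positivity)
    _ ≤ f₀ (x k) + μ * ‖x k - x k‖ ^ 2 := hopt k _ fun i ↦ by simpa [quadModel] using hfeas k i
    _ = f₀ (x k) := by simp

lemma le_add_sq_of_quadModel_neg [Finite ι] (hμ : 0 ≤ μ) (hfeas : ∀ k i, f i (x k) ≤ 0)
    (hopt : ∀ k y, (∀ i, quadModel (f i) (M i) (g i k) (x k) y ≤ 0) →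
      f₀ (x (k + 1)) + μ * ‖x (k + 1) - x k‖ ^ 2 ≤ f₀ y + μ * ‖y - x k‖ ^ 2)
    (hf₀ : ContinuousAt f₀ x_c) (hf : ∀ i, ContinuousAt (f i) x_c)
    [F.NeBot] (hF : F ≤ atTop) (hx : Tendsto x F (𝓝 x_c))
    (hg : ∀ i, Tendsto (g i) F (𝓝 (g_c i)))
    {y : E} (hy : ∀ i, quadModel (f i) (M i) (g_c i) x_c y < 0) :
    f₀ x_c ≤ f₀ y + μ * ‖y - x_c‖ ^ 2 := by
  have hlower (n : ℕ) : f₀ x_c ≤ f₀ (x n) :=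
    le_of_tendsto (hf₀.tendsto.comp hx) <| hF <| (eventually_ge_atTop n).mono fun _ hk ↦
      antitone_objective hμ hfeas hopt hk
  have hmem : ∀ᶠ k in F, ∀ i, quadModel (f i) (M i) (g i k) (x k) y < 0 :=
    eventually_all.2 fun i ↦ (tendsto_quadModel (hf i) (M i) y (hg i) hx).eventually_lt_const (hy i)
  have hlim : Tendsto (fun k ↦ f₀ y + μ * ‖y - x k‖ ^ 2) F (𝓝 (f₀ y + μ * ‖y - x_c‖ ^ 2)) :=
    (((hx.const_sub y).norm.pow 2).const_mul μ).const_add (f₀ y)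
  refine ge_of_tendsto hlim (hmem.mono fun k hk ↦ ?_)
  calc f₀ x_c
      ≤ f₀ (x (k + 1)) := hlower (k + 1)
    _ ≤ f₀ (x (k + 1)) + μ * ‖x (k + 1) - x k‖ ^ 2 := le_add_of_nonneg_right (by positivity)
    _ ≤ f₀ y + μ * ‖y - x k‖ ^ 2 := hopt k y fun i ↦ (hk i).le

theorem isLeast_image_of_tendsto_gradientEstimates [CompleteSpace E] [Finite ι]
    (hconv₀ : ConvexOn ℝ univ f₀) (hcont₀ : Continuous f₀)
    (hconv : ∀ i, ConvexOn ℝ univ (f i)) (hμ : 0 ≤ μ) (hfeas : ∀ k i, f i (x k) < 0)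
    (hopt : ∀ k y, (∀ i, quadModel (f i) (M i) (g i k) (x k) y ≤ 0) →
      f₀ (x (k + 1)) + μ * ‖x (k + 1) - x k‖ ^ 2 ≤ f₀ y + μ * ‖y - x k‖ ^ 2)
    [F.NeBot] (hF : F ≤ atTop) (hx : Tendsto x F (𝓝 x_c))
    (hgrad : ∀ i, HasGradientAt (f i) (g_c i) x_c)
    (hg : ∀ i, Tendsto (g i) F (𝓝 (g_c i))) :
    IsLeast (f₀ '' {y | ∀ i, f i y ≤ 0}) (f₀ x_c) := by
  have hcont (i : ι) : ContinuousAt (f i) x_c := (hgrad i).differentiableAt.continuousAt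
  have hfeas_c (i : ι) : f i x_c ≤ 0 :=
    le_of_tendsto ((hcont i).tendsto.comp hx) (.of_forall fun k ↦ (hfeas k i).le)
  have hstrict : IsMinOn f₀ {y | ∀ i, f i y < 0} x_c := isMinOn_iff.2 fun w hw ↦ by
    have hsegment : ∀ᶠ s : ℝ in 𝓝[>] 0, ∀ i,
        quadModel (f i) (M i) (g_c i) x_c (AffineMap.lineMap x_c w s) < 0 :=
      eventually_all.2 fun i ↦ eventually_quadModel_lineMap_neg
        (hasLineDerivAt_le_sub_of_convexOn (hconv i) ((hgrad i).hasFDerivAt.hasLineDerivAt _))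
        (hfeas_c i) (hw i) (M i)
    exact le_of_eventually_le_lineMap_add_sq hconv₀ <| hsegment.mono fun s hs ↦
      le_add_sq_of_quadModel_neg hμ (fun k i ↦ (hfeas k i).le) hopt hcont₀.continuousAt hcont
        hF hx hg hs
  have hmin := (hstrict.closure hcont₀.continuousOn).on_subset
    (setOf_nonpos_subset_closure_setOf_neg hconv (hfeas 0))
  exact ⟨mem_image_of_mem f₀ hfeas_c, forall_mem_image.2 hmin⟩

end ProximalIteration

section StepSize

variable {d : ℕ} {ι : Type*} [Finite ι] {Lmax : ℝ} {l ν : ℕ → ℝ}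

lemma tendsto_stepSize [Nonempty ι] {X : Type*} {f : ι → X → ℝ} {x : ℕ → X} (hd : 1 ≤ d)
    (hLmax : 0 < Lmax) (hfeas : ∀ k i, f i (x k) < 0)
    (hl : ∀ k, l k = ⨅ i, (-(f i (x k))) / Lmax)
    (hν : ∀ k : ℕ, 1 ≤ k → ν k = min (2 * l k / Real.sqrt d) (1 / (k : ℝ))) :
    Tendsto ν atTop (𝓝[>] 0) := by
  have hlpos (k : ℕ) : 0 < l k := by
    obtain ⟨i, hi⟩ := exists_eq_ciInf_of_finite (f := fun i ↦ (-(f i (x k))) / Lmax)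
    rw [hl, ← hi]
    exact div_pos (neg_pos.2 (hfeas k i)) hLmax
  have hνpos : ∀ᶠ k in atTop, 0 < ν k := by
    filter_upwards [eventually_ge_atTop 1] with k hk
    have hsqrt : 0 < Real.sqrt d := Real.sqrt_pos.2 (Nat.cast_pos.2 hd)
    rw [hν k hk]
    exact lt_min (div_pos (mul_pos two_pos (hlpos k)) hsqrt) (by positivity)
  have hνle : ∀ᶠ k in atTop, ν k ≤ 1 / (k : ℝ) := by
    filter_upwards [eventually_ge_atTop 1] with k hk
    exact (hν k hk).trans_le (min_le_right _ _)
  exact tendsto_nhdsWithin_iff.2 ⟨squeeze_zero' (hνpos.mono fun _ ↦ le_of_lt) hνle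
    tendsto_one_div_atTop_nhds_zero_nat, hνpos⟩

lemma tendsto_fdGrad_stepSize {f : ι → EuclideanSpace ℝ (Fin d) → ℝ} {L : ι → ℝ}
    {x : ℕ → EuclideanSpace ℝ (Fin d)} (hd : 1 ≤ d) {i : ι} (hconv : ConvexOn ℝ univ (f i))
    (hL : ∀ x₁ x₂, |f i x₁ - f i x₂| ≤ L i * ‖x₁ - x₂‖) (hLmax : Lmax = ⨆ i, L i)
    (hfeas : ∀ k i, f i (x k) < 0) (hl : ∀ k, l k = ⨅ i, (-(f i (x k))) / Lmax)
    (hν : ∀ k : ℕ, 1 ≤ k → ν k = min (2 * l k / Real.sqrt d) (1 / (k : ℝ)))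
    {F : Filter ℕ} (hF : F ≤ atTop) {x_c : EuclideanSpace ℝ (Fin d)}
    (hx : Tendsto x F (𝓝 x_c)) (hdiff : DifferentiableAt ℝ (f i) x_c) :
    Tendsto (fun k ↦ fdGrad d (f i) (x k) (ν k)) F (𝓝 (gradient (f i) x_c)) := by
  rcases lt_or_ge 0 Lmax with hpos | hnonpos
  · have : Nonempty ι := ⟨i⟩
    exact tendsto_fdGrad_of_convexOn hconv hdiff.hasGradientAt hx
      ((tendsto_stepSize hd hpos hfeas hl hν).mono_left hF)
  · -- `Lmax = 0` makes `ν k` a division-by-zero junk value, but then `f i` is constant and its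
    -- estimated gradient vanishes for any step.
    have hLi : L i ≤ 0 := (le_ciSup (finite_range L).bddAbove i).trans (hLmax ▸ hnonpos)
    have hconst : f i = fun _ ↦ f i 0 := funext fun y ↦ sub_eq_zero.1 <| abs_nonpos_iff.1 <|
      (hL y 0).trans (mul_nonpos_of_nonpos_of_nonneg hLi (norm_nonneg _))
    rw [hconst, gradient_fun_const]
    simp only [fdGrad_const, tendsto_const_nhds]

end StepSize

theorem stmt16_general {d : ℕ} (hd : 1 ≤ d) {ι : Type*} [Finite ι]
    {f₀ : EuclideanSpace ℝ (Fin d) → ℝ} {f : ι → EuclideanSpace ℝ (Fin d) → ℝ}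
    (hconv₀ : ConvexOn ℝ univ f₀) (hconv : ∀ i, ConvexOn ℝ univ (f i))
    {L M : ι → ℝ} {μ : ℝ} (hμ : 0 ≤ μ)
    (hL : ∀ i x₁ x₂, |f i x₁ - f i x₂| ≤ L i * ‖x₁ - x₂‖)
    {Lmax : ℝ} (hLmax : Lmax = ⨆ i, L i)
    {x : ℕ → EuclideanSpace ℝ (Fin d)} (hfeas : ∀ k i, f i (x k) < 0)
    {l ν : ℕ → ℝ} (hl : ∀ k, l k = ⨅ i, (-(f i (x k))) / Lmax)
    (hν : ∀ k : ℕ, 1 ≤ k → ν k = min (2 * l k / Real.sqrt d) (1 / (k : ℝ)))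
    (hopt : ∀ k y, (∀ i, quadModel (f i) (M i) (fdGrad d (f i) (x k) (ν k)) (x k) y ≤ 0) →
      f₀ (x (k + 1)) + μ * ‖x (k + 1) - x k‖ ^ 2 ≤ f₀ y + μ * ‖y - x k‖ ^ 2)
    {x_c : EuclideanSpace ℝ (Fin d)} (hdiff : ∀ i, DifferentiableAt ℝ (f i) x_c)
    (hx : MapClusterPt x_c atTop x) :
    IsLeast (f₀ '' {y | ∀ i, f i y ≤ 0}) (f₀ x_c) := by
  obtain ⟨F, hF, hxF⟩ := mapClusterPt_iff_ultrafilter.1 hx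
  exact isLeast_image_of_tendsto_gradientEstimates hconv₀ hconv₀.locallyLipschitz.continuous hconv
    hμ hfeas hopt hF hxF (fun i ↦ (hdiff i).hasGradientAt)
    fun i ↦ tendsto_fdGrad_stepSize hd (hconv i) (hL i) hLmax hfeas hl hν hF hxF (hdiff i)

theorem stmt16 (d m : ℕ) (hd : 1 ≤ d) [NeZero m]
    (f₀ : EuclideanSpace ℝ (Fin d) → ℝ) (f : Fin m → EuclideanSpace ℝ (Fin d) → ℝ)
    (hconv₀ : ConvexOn ℝ Set.univ f₀) (hconv : ∀ i, ConvexOn ℝ Set.univ (f i))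
    (hdiff₀ : Differentiable ℝ f₀) (hdiff : ∀ i, Differentiable ℝ (f i))
    (L₀ M₀ : ℝ) (L Minf M : Fin m → ℝ) (μ : ℝ) (hμ : 0 < μ)
    (hL₀ : ∀ x₁ x₂, |f₀ x₁ - f₀ x₂| ≤ L₀ * ‖x₁ - x₂‖)
    (hM₀ : ∀ x₁ x₂, ‖gradient f₀ x₁ - gradient f₀ x₂‖ ≤ M₀ * ‖x₁ - x₂‖)
    (hL : ∀ i x₁ x₂, |f i x₁ - f i x₂| ≤ L i * ‖x₁ - x₂‖)
    (hMinf : ∀ i x₁ x₂, ‖gradient (f i) x₁ - gradient (f i) x₂‖ ≤ Minf i * ‖x₁ - x₂‖)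
    (hM : ∀ i, Minf i < M i)
    (Lmax : ℝ) (hLmax : Lmax = ⨆ i, L i)
    (Ω : Set (EuclideanSpace ℝ (Fin d))) (hΩ : Ω = {y | ∀ i, f i y ≤ 0})
    (x : ℕ → EuclideanSpace ℝ (Fin d))
    (hfeas : ∀ k i, f i (x k) < 0)
    (l ν : ℕ → ℝ)
    (hl : ∀ k, l k = ⨅ i, (-(f i (x k))) / Lmax)
    (hν₀ : ν 0 = 2 * l 0 / Real.sqrt d)
    (hνk : ∀ k : ℕ, 1 ≤ k → ν k = min (2 * l k / Real.sqrt d) (1 / (k : ℝ)))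
    (S : ℕ → Set (EuclideanSpace ℝ (Fin d)))
    (hS : ∀ k, S k = ⋂ i, {y : EuclideanSpace ℝ (Fin d) |
        f i (x k) + ⟪fdGrad d (f i) (x k) (ν k), y - x k⟫ + 2 * M i * ‖y - x k‖ ^ 2 ≤ 0})
    (hstep : ∀ k, x (k + 1) ∈ S k)
    (hopt : ∀ k, ∀ y ∈ S k,
      f₀ (x (k + 1)) + μ * ‖x (k + 1) - x k‖ ^ 2 ≤ f₀ y + μ * ‖y - x k‖ ^ 2)
    (β : ℝ)
    (hβbdd : Bornology.IsBounded {y ∈ Ω | f₀ y ≤ β})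
    (hβ₀ : x 0 ∈ Ω ∧ f₀ (x 0) ≤ β)
    (x_cstar : EuclideanSpace ℝ (Fin d)) (ψ : ℕ → ℕ) (hψ : StrictMono ψ)
    (hlimstar : Tendsto (x ∘ ψ) atTop (nhds x_cstar))
    (hgradstar : ∀ i, f i x_cstar = 0 → gradient (f i) x_cstar ≠ 0) :
    ∀ (x_c : EuclideanSpace ℝ (Fin d)) (φ : ℕ → ℕ), StrictMono φ →
      Tendsto (x ∘ φ) atTop (nhds x_c) →
      f₀ x_c = sInf (f₀ '' Ω) := by
  intro x_c φ hφ hlim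
  subst hΩ
  exact (stmt16_general hd hconv₀ hconv hμ.le hL hLmax hfeas hl hνk
    (fun k y hy ↦ hopt k y (hS k ▸ mem_iInter.2 hy)) (fun i ↦ hdiff i x_c)
    (.of_comp hφ.tendsto_atTop hlim.mapClusterPt)).csInf_eq.symm
end

section
/- Let f : ℝ^d → ℝ, let x_c, x' ∈ ℝ^d, g ∈ ℝ^d, and constants L_max, M_max, M, r_c > 0 with M ≤ M_max. Suppose f(x_c) < 0, f(x') < f(x_c)/2, ‖g‖ ≤ 2 L_max, 2 L_max ‖x_c − x'‖ + 4 M_max ‖x_c − x'‖² < −f(x_c)/4, and 2 L_max r_c + 4 M_max r_c² < −f(x_c)/4. Then every y with ‖y − x_c‖ ≤ r_c satisfies f(x') + ⟨g, y − x'⟩ + 2M‖y − x'‖² < 0; that is, the closed ball of radius r_c around x_c is contained in the quadratic sublevel set {y : f(x') + ⟨g, y − x'⟩ + 2M‖y − x'‖² ≤ 0}. -/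
open RealInnerProductSpace

/-!
Since `y - x' = (y - x_c) + (x_c - x')`, Cauchy–Schwarz and `(a + b) ^ 2 ≤ 2 * (a ^ 2 + b ^ 2)`
bound the increment of the quadratic model by two terms, one for each displacement. Each term is
less than `-f x_c / 4`, and together they do not exceed the margin `-f x_c / 2` available at `x'`;
the coefficient `4 * Mmax`, twice that of the model, absorbs the factor `2`.
-/

theorem real_inner_add_mul_norm_sq_le {E : Type*} [SeminormedAddCommGroup E]
    [InnerProductSpace ℝ E] {g : E} {L M K : ℝ} (hg : ‖g‖ ≤ L) (hMK : M ≤ K) (v : E) :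
    ⟪g, v⟫ + M * ‖v‖ ^ 2 ≤ L * ‖v‖ + K * ‖v‖ ^ 2 := by
  have inner_le : ⟪g, v⟫ ≤ L * ‖v‖ := (real_inner_le_norm g v).trans (by gcongr)
  gcongr

theorem mul_norm_add_mul_norm_sq_add_le {E : Type*} [SeminormedAddGroup E] {L K : ℝ}
    (hL : 0 ≤ L) (hK : 0 ≤ K) (u v : E) :
    L * ‖u + v‖ + K * ‖u + v‖ ^ 2 ≤
      (L * ‖u‖ + 2 * K * ‖u‖ ^ 2) + (L * ‖v‖ + 2 * K * ‖v‖ ^ 2) := by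
  have norm_le : ‖u + v‖ ≤ ‖u‖ + ‖v‖ := norm_add_le u v
  calc
    L * ‖u + v‖ + K * ‖u + v‖ ^ 2 ≤ L * (‖u‖ + ‖v‖) + K * (‖u‖ + ‖v‖) ^ 2 := by gcongr
    _ ≤ L * (‖u‖ + ‖v‖) + K * (2 * (‖u‖ ^ 2 + ‖v‖ ^ 2)) := by gcongr; exact add_sq_le
    _ = (L * ‖u‖ + 2 * K * ‖u‖ ^ 2) + (L * ‖v‖ + 2 * K * ‖v‖ ^ 2) := by ring

theorem stmt17_general {E : Type*} [SeminormedAddCommGroup E] [InnerProductSpace ℝ E]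
    {f : E → ℝ} {x_c x' g : E} {Lmax Mmax M r_c : ℝ} (hMmax : 0 ≤ Mmax) (hMle : M ≤ Mmax)
    (hfx' : f x' < f x_c / 2) (hg : ‖g‖ ≤ 2 * Lmax)
    (hclose : 2 * Lmax * ‖x_c - x'‖ + 4 * Mmax * ‖x_c - x'‖ ^ 2 < -f x_c / 4)
    (hrball : 2 * Lmax * r_c + 4 * Mmax * r_c ^ 2 < -f x_c / 4)
    {y : E} (hy : ‖y - x_c‖ ≤ r_c) :
    f x' + ⟪g, y - x'⟫ + 2 * M * ‖y - x'‖ ^ 2 < 0 := by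
  have hLmax : 0 ≤ 2 * Lmax := (norm_nonneg g).trans hg
  have model_le : ⟪g, y - x'⟫ + 2 * M * ‖y - x'‖ ^ 2 ≤
      2 * Lmax * ‖y - x'‖ + 2 * Mmax * ‖y - x'‖ ^ 2 :=
    real_inner_add_mul_norm_sq_le hg (by gcongr) _
  have split_le := mul_norm_add_mul_norm_sq_add_le hLmax
    (mul_nonneg zero_le_two hMmax) (y - x_c) (x_c - x')
  rw [sub_add_sub_cancel] at split_le
  have ball_le : 2 * Lmax * ‖y - x_c‖ + 4 * Mmax * ‖y - x_c‖ ^ 2 ≤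
      2 * Lmax * r_c + 4 * Mmax * r_c ^ 2 := by gcongr
  linarith

theorem stmt17 (d : ℕ) (f : EuclideanSpace ℝ (Fin d) → ℝ)
    (x_c x' : EuclideanSpace ℝ (Fin d)) (g : EuclideanSpace ℝ (Fin d))
    (Lmax Mmax M r_c : ℝ) (hLmax : 0 < Lmax) (hMmax : 0 < Mmax) (hMpos : 0 < M)
    (hrc : 0 < r_c) (hMle : M ≤ Mmax)
    (hfc : f x_c < 0) (hfx' : f x' < f x_c / 2) (hg : ‖g‖ ≤ 2 * Lmax)
    (hclose : 2 * Lmax * ‖x_c - x'‖ + 4 * Mmax * ‖x_c - x'‖ ^ 2 < -f x_c / 4)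
    (hrball : 2 * Lmax * r_c + 4 * Mmax * r_c ^ 2 < -f x_c / 4) :
    ∀ y : EuclideanSpace ℝ (Fin d), ‖y - x_c‖ ≤ r_c →
      f x' + ⟪g, y - x'⟫ + 2 * M * ‖y - x'‖ ^ 2 < 0 :=
  fun _ hy => stmt17_general hMmax.le hMle hfx' hg hclose hrball hy
end
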